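/- Let α > −1 and β be real parameters and let J(x,y,z) denote the 3×3 Jacobian matrix of the vector field of system (18). Then for either sign ε = ±1, the averaged matrix A = (1/(2π)) ∫₀^{2π} J(√(1+α) sin s, √(1+α) cos s, εβ) ds equals ![![α(1+α), 1, 0], ![−1, α(1+α), 0], ![0, 0, −2β²]], and the eigenvalues of A over ℂ are −2β², α² + α + i, and α² + α − i; in particular the real parts of its eigenvalues are −2β², α² + α, α² + α. -/

import Mathlib

open Real MeasureTheory

/-- The vector field of system (18). -/
noncomputable def vf18 (α β : ℝ) : (Fin 3 → ℝ) → (Fin 3 → ℝ) := fun v =>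
  ![v 1 + v 0 * (1 - v 0 ^ 2 - v 1 ^ 2) * (1 + α - v 0 ^ 2 - v 1 ^ 2),
    -v 0 + v 1 * (1 - v 0 ^ 2 - v 1 ^ 2) * (1 + α - v 0 ^ 2 - v 1 ^ 2),
    β ^ 2 * v 2 - v 2 ^ 3]

/-- The Jacobian matrix of a vector field on ℝ³: entry (i, j) is the partial derivative of
the i-th component with respect to the j-th coordinate. -/
noncomputable def jacobian (F : (Fin 3 → ℝ) → (Fin 3 → ℝ)) (p : Fin 3 → ℝ) :
    Matrix (Fin 3) (Fin 3) ℝ :=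
  Matrix.of fun i j => fderiv ℝ (fun v => F v i) p (Pi.single j 1)

/-- The Jacobian matrix of `vf18` in closed form. -/
theorem jacobian_vf18 (α β : ℝ) (p : Fin 3 → ℝ) :
    jacobian (vf18 α β) p =
      let g := 1 - p 0 ^ 2 - p 1 ^ 2
      let h := 1 + α - p 0 ^ 2 - p 1 ^ 2
      !![g * h - 2 * p 0 ^ 2 * (g + h), 1 - 2 * p 0 * p 1 * (g + h), 0;
        -1 - 2 * p 0 * p 1 * (g + h), g * h - 2 * p 1 ^ 2 * (g + h), 0;
        0, 0, β ^ 2 - 3 * p 2 ^ 2] := by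
  have hx (k : Fin 3) : HasFDerivAt (fun v : Fin 3 → ℝ => v k)
      (ContinuousLinearMap.proj (R := ℝ) (φ := fun _ : Fin 3 => ℝ) k) p := hasFDerivAt_apply k p
  have hg (c : ℝ) := (((hx 0).pow 2).const_sub c).sub ((hx 1).pow 2)
  have h0 := (hx 1).add (((hx 0).mul (hg 1)).mul (hg (1 + α)))
  have h1 := (hx 0).neg.add (((hx 1).mul (hg 1)).mul (hg (1 + α)))
  have h2 := ((hx 2).const_mul (β ^ 2)).sub ((hx 2).pow 3)
  have e0 : fderiv ℝ (fun v => vf18 α β v 0) p = _ := h0.fderiv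
  have e1 : fderiv ℝ (fun v => vf18 α β v 1) p = _ := h1.fderiv
  have e2 : fderiv ℝ (fun v => vf18 α β v 2) p = _ := h2.fderiv
  ext i j
  fin_cases i <;> simp only [jacobian, Matrix.of_apply, Fin.zero_eta, Fin.mk_one,
    Fin.reduceFinMk, e0, e1, e2] <;> fin_cases j <;> simp <;> ring

/-- On the cylinder `x² + y² = 1 + α` at height `z² = β²` the Jacobian simplifies. -/
theorem jacobian_vf18_cycle {α β ε : ℝ} (hα : -1 < α) (hε : ε = 1 ∨ ε = -1) (s : ℝ) :
    jacobian (vf18 α β) ![√(1 + α) * sin s, √(1 + α) * cos s, ε * β] =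
      !![2 * α * (1 + α) * sin s ^ 2, 1 + 2 * α * (1 + α) * (sin s * cos s), 0;
        -1 + 2 * α * (1 + α) * (sin s * cos s), 2 * α * (1 + α) * cos s ^ 2, 0;
        0, 0, -2 * β ^ 2] := by
  have hr : √(1 + α) ^ 2 = 1 + α := sq_sqrt (by linarith)
  have hε2 : ε ^ 2 = 1 := by rcases hε with rfl | rfl <;> norm_num
  have hc : 1 + α - (√(1 + α) * sin s) ^ 2 - (√(1 + α) * cos s) ^ 2 = 0 := by
    linear_combination (-(sin s ^ 2 + cos s ^ 2)) * hr - (1 + α) * sin_sq_add_cos_sq s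
  have hd : 1 - (√(1 + α) * sin s) ^ 2 - (√(1 + α) * cos s) ^ 2 = -α := by
    linear_combination hc
  rw [jacobian_vf18]
  ext i j
  fin_cases i <;> fin_cases j <;> simp [hc, hd]
  · linear_combination 2 * α * sin s ^ 2 * hr
  · linear_combination 2 * α * sin s * cos s * hr
  · linear_combination 2 * α * sin s * cos s * hr
  · linear_combination 2 * α * cos s ^ 2 * hr
  · linear_combination -3 * β ^ 2 * hε2

/-- The roots of the characteristic polynomial of a `2 + 1` block matrix whose planar block is
a rotation-scaling. -/
theorem charpoly_roots_rotation_block (a b c : ℂ) :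
    (!![a, b, 0; -b, a, 0; 0, 0, c] : Matrix (Fin 3) (Fin 3) ℂ).charpoly.roots =
      {c, a + b * Complex.I, a - b * Complex.I} := by
  have h : (!![a, b, 0; -b, a, 0; 0, 0, c] : Matrix (Fin 3) (Fin 3) ℂ).charpoly =
      (({c, a + b * Complex.I, a - b * Complex.I} : Multiset ℂ).map
        fun z => Polynomial.X - Polynomial.C z).prod := by
    have hI : (Polynomial.C Complex.I : Polynomial ℂ) ^ 2 = -1 := by
      rw [← Polynomial.C_pow, Complex.I_sq]; simp
    simp [Matrix.charpoly, Matrix.det_fin_three]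
    linear_combination
      (Polynomial.X - Polynomial.C c) * Polynomial.C b ^ 2 * hI
  rw [h, Polynomial.roots_multiset_prod_X_sub_C]

/-- the averaged Jacobian along the limit cycles (v) and (vi) of system (18),
its explicit value, and its eigenvalues (with real parts −2β², α² + α, α² + α). -/
theorem stmt_7 (α β : ℝ) (hα : -1 < α) :
    ∀ ε : ℝ, ε = 1 ∨ ε = -1 →
    ∀ A : Matrix (Fin 3) (Fin 3) ℝ,
      (A = Matrix.of fun i j =>
        (2 * π)⁻¹ * ∫ s in (0:ℝ)..(2 * π),
          jacobian (vf18 α β)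
            ![Real.sqrt (1 + α) * Real.sin s, Real.sqrt (1 + α) * Real.cos s, ε * β] i j) →
      A = !![α * (1 + α), 1, 0; -1, α * (1 + α), 0; 0, 0, -2 * β ^ 2] ∧
      (A.map (Complex.ofReal)).charpoly.roots =
        {-2 * (β : ℂ) ^ 2, (α : ℂ) ^ 2 + (α : ℂ) + Complex.I,
          (α : ℂ) ^ 2 + (α : ℂ) - Complex.I} ∧
      ((A.map (Complex.ofReal)).charpoly.roots.map Complex.re) =
        {-2 * β ^ 2, α ^ 2 + α, α ^ 2 + α} := by
  intro ε hε A hA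
  have hval : A = !![α * (1 + α), 1, 0; -1, α * (1 + α), 0; 0, 0, -2 * β ^ 2] := by
    have hsc : IntervalIntegrable (fun s => 2 * α * (1 + α) * (sin s * cos s))
        volume 0 (2 * π) := by
      apply Continuous.intervalIntegrable
      fun_prop
    rw [hA]
    ext i j
    simp only [jacobian_vf18_cycle hα hε, Matrix.of_apply]
    fin_cases i <;> fin_cases j <;>
      simp [intervalIntegral.integral_add, hsc, integral_sin_sq, integral_cos_sq,
        integral_sin_mul_cos₁] <;> field_simp
  have hroots : (A.map (Complex.ofReal)).charpoly.roots =
      {-2 * (β : ℂ) ^ 2, (α : ℂ) ^ 2 + (α : ℂ) + Complex.I,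
        (α : ℂ) ^ 2 + (α : ℂ) - Complex.I} := by
    have hmap : A.map Complex.ofReal =
        !![(α : ℂ) ^ 2 + α, 1, 0; -1, (α : ℂ) ^ 2 + α, 0; 0, 0, -2 * (β : ℂ) ^ 2] := by
      rw [hval]
      ext i j
      fin_cases i <;> fin_cases j <;> simp <;> ring
    rw [hmap, charpoly_roots_rotation_block, one_mul]
  refine ⟨hval, hroots, ?_⟩
  rw [hroots]
  simp [← Complex.ofReal_pow]
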